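/- Let κ, γ₁, γ₂, c ∈ ℝ and define the 7×7 real matrix A by A = [[2γ₁,0,0,0,0,0,0], [−(γ₁−2γ₂)c, 4κ, 0, 0, 0, (γ₁−2γ₂)/2, 0], [0,0,2κ+γ₁,0,0,0,0], [0,0,0,8κ,0,−γ₁c,0], [0,0,−γ₁c,0,6κ,0,0], [−2γ₂c,0,0,0,0,4κ+γ₂,0], [0,0,0,0,0,0,4κ]]. Then the characteristic polynomial of A is det(λ·Id − A) = (λ−2γ₁)(λ−4κ)²(λ−(2κ+γ₁))(λ−8κ)(λ−6κ)(λ−(4κ+γ₂)). In particular, if γ₁ ≥ 0, γ₂ ≥ 0 and κ > 0, all eigenvalues of A are real and nonnegative. -/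

import Mathlib

open Matrix

/-- Determinant of a matrix with the sparsity pattern of `λ - A`. -/
lemma det_pattern {R : Type*} [CommRing R] (a b d e f g h p q r s t : R) :
    (!![a, 0, 0, 0, 0, 0, 0;
        p, b, 0, 0, 0, q, 0;
        0, 0, d, 0, 0, 0, 0;
        0, 0, 0, e, 0, r, 0;
        0, 0, s, 0, f, 0, 0;
        t, 0, 0, 0, 0, g, 0;
        0, 0, 0, 0, 0, 0, h] : Matrix (Fin 7) (Fin 7) R).det = a * b * d * e * f * g * h := by
  simp [Matrix.det_succ_row_zero, Fin.sum_univ_succ, Fin.succAbove]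
  try ring

lemma det_A {K : Type*} [Field K] (κ γ₁ γ₂ c lam : K) :
    (lam • (1 : Matrix (Fin 7) (Fin 7) K) -
      !![2 * γ₁, 0, 0, 0, 0, 0, 0;
                 -((γ₁ - 2 * γ₂) * c), 4 * κ, 0, 0, 0, (γ₁ - 2 * γ₂) / 2, 0;
                 0, 0, 2 * κ + γ₁, 0, 0, 0, 0;
                 0, 0, 0, 8 * κ, 0, -(γ₁ * c), 0;
                 0, 0, -(γ₁ * c), 0, 6 * κ, 0, 0;
                 -(2 * γ₂ * c), 0, 0, 0, 0, 4 * κ + γ₂, 0;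
                 0, 0, 0, 0, 0, 0, 4 * κ]).det =
      (lam - 2 * γ₁) * (lam - 4 * κ) ^ 2 * (lam - (2 * κ + γ₁)) * (lam - 8 * κ)
        * (lam - 6 * κ) * (lam - (4 * κ + γ₂)) := by
  have h := det_pattern (lam - 2 * γ₁) (lam - 4 * κ) (lam - (2 * κ + γ₁)) (lam - 8 * κ)
    (lam - 6 * κ) (lam - (4 * κ + γ₂)) (lam - 4 * κ) ((γ₁ - 2 * γ₂) * c)
    (-((γ₁ - 2 * γ₂) / 2)) (γ₁ * c) (γ₁ * c) (2 * γ₂ * c)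
  refine Eq.trans (congrArg Matrix.det ?_) (h.trans (by ring))
  ext i j
  fin_cases i <;> fin_cases j <;> simp [Matrix.one_apply]

/-- The characteristic polynomial of the radial-point subprincipal matrix `A` of the
modified linearized gauged Einstein operator factors as
`(λ−2γ₁)(λ−4κ)²(λ−(2κ+γ₁))(λ−8κ)(λ−6κ)(λ−(4κ+γ₂))`; in particular, if `γ₁, γ₂ ≥ 0` and
`κ > 0`, all (complex) eigenvalues of `A` are real and nonnegative. -/
theorem stmt_19 (κ γ₁ γ₂ c : ℝ)
    (A : Matrix (Fin 7) (Fin 7) ℝ)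
    (hA : A = !![2 * γ₁, 0, 0, 0, 0, 0, 0;
                 -((γ₁ - 2 * γ₂) * c), 4 * κ, 0, 0, 0, (γ₁ - 2 * γ₂) / 2, 0;
                 0, 0, 2 * κ + γ₁, 0, 0, 0, 0;
                 0, 0, 0, 8 * κ, 0, -(γ₁ * c), 0;
                 0, 0, -(γ₁ * c), 0, 6 * κ, 0, 0;
                 -(2 * γ₂ * c), 0, 0, 0, 0, 4 * κ + γ₂, 0;
                 0, 0, 0, 0, 0, 0, 4 * κ]) :
    (∀ lam : ℝ, (lam • (1 : Matrix (Fin 7) (Fin 7) ℝ) - A).det =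
      (lam - 2 * γ₁) * (lam - 4 * κ) ^ 2 * (lam - (2 * κ + γ₁)) * (lam - 8 * κ)
        * (lam - 6 * κ) * (lam - (4 * κ + γ₂))) ∧
    (0 ≤ γ₁ → 0 ≤ γ₂ → 0 < κ →
      ∀ z : ℂ, (z • (1 : Matrix (Fin 7) (Fin 7) ℂ) - A.map (fun x => (x : ℂ))).det = 0 →
        z.im = 0 ∧ 0 ≤ z.re) := by
  subst hA
  refine ⟨fun lam => det_A κ γ₁ γ₂ c lam, fun h1 h2 hk z hz => ?_⟩
  have key : ∀ x : ℝ, 0 ≤ x → z - (x : ℂ) = 0 → z.im = 0 ∧ 0 ≤ z.re := by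
    intro x hx h
    rw [sub_eq_zero.mp h]
    simpa using hx
  have hd := det_A (κ : ℂ) γ₁ γ₂ c z
  have hz' := hd.symm.trans (Eq.trans (congrArg Matrix.det ?_) hz)
  · simp only [mul_eq_zero, pow_eq_zero_iff two_ne_zero] at hz'
    rcases hz' with (((((h | h) | h) | h) | h) | h)
    · exact key (2 * γ₁) (by positivity) (by push_cast; exact h)
    · exact key (4 * κ) (by positivity) (by push_cast; exact h)
    · exact key (2 * κ + γ₁) (by positivity) (by push_cast; exact h)
    · exact key (8 * κ) (by positivity) (by push_cast; exact h)
    · exact key (6 * κ) (by positivity) (by push_cast; exact h)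
    · exact key (4 * κ + γ₂) (by positivity) (by push_cast; exact h)
  · congr 1
    ext i j
    fin_cases i <;> fin_cases j <;> simp
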